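/- For every n ≥ 1 and every k with 0 ≤ k ≤ n−1, there exists a surjection F from {1,…,n}^k × {B ⊆ {1,…,n} : |B| = k+1} onto Σ_n(k) such that for all (A,B) and (A′,B′) in the domain, F(A,B) = F(A′,B′) if and only if there exists r ∈ ℤ with A′ = (c^r(a₁),…,c^r(a_k)) and B′ = c^r(B) (the image of B under c^r), where A = (a₁,…,a_k). In particular, every fibre of F has exactly n elements. -/

import Mathlib

/-- ℓ(σ): the number of cycles (orbits) of σ, including fixed points, counted via the
minimal representative of each orbit. -/
noncomputable def cycleCount {n : ℕ} (σ : Equiv.Perm (Fin n)) : ℕ :=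
  Set.ncard {x : Fin n | ∀ y, σ.SameCycle x y → x ≤ y}

/-- |σ| := n − ℓ(σ). -/
noncomputable def normPerm {n : ℕ} (σ : Equiv.Perm (Fin n)) : ℕ := n - cycleCount σ

/-- σ₁ ≼ σ₂ iff |σ₂| = |σ₁| + |σ₁⁻¹σ₂|. -/
def precLe {n : ℕ} (σ₁ σ₂ : Equiv.Perm (Fin n)) : Prop :=
  normPerm σ₂ = normPerm σ₁ + normPerm (σ₁⁻¹ * σ₂)

/-- Σ_n(k): tuples of k transpositions with |τ₁⋯τ_k| = k and τ₁⋯τ_k ≼ (1 … n). -/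
def SigmaSet (n k : ℕ) : Set (Fin k → Equiv.Perm (Fin n)) :=
  {τ | (∀ l, (τ l).IsSwap) ∧ normPerm (List.ofFn τ).prod = k ∧
      precLe (List.ofFn τ).prod (finRotate n)}

/-- γ_m := τ₁∘⋯∘τ_m, the product of the first m entries of the chain. -/
def gammaP {n k : ℕ} (τ : Fin k → Equiv.Perm (Fin n)) (m : ℕ) : Equiv.Perm (Fin n) :=
  ((List.ofFn τ).take m).prod

section Helpers

open Equiv Equiv.Perm Finset

section Gen
variable {α : Type*}

theorem sc_le_rel (f : Perm α) (R : α → α → Prop) (hR : Equivalence R)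
    (h : ∀ z, R z (f z)) {u v : α} (huv : f.SameCycle u v) : R u v := by
  obtain ⟨i, rfl⟩ := huv
  have hn : ∀ (m : ℕ) (u : α), R u ((f ^ m) u) := by
    intro m
    induction m with
    | zero => intro u; exact hR.refl u
    | succ m ih =>
      intro u
      rw [pow_succ', Perm.mul_apply]
      exact hR.trans (ih u) (h _)
  cases i with
  | ofNat m => simpa using hn m u
  | negSucc m =>
    have := hn (m+1) ((f ^ Int.negSucc m) u)
    rw [zpow_negSucc, ← Perm.mul_apply, mul_inv_cancel, Perm.one_apply] at this
    rw [zpow_negSucc]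
    exact hR.symm this

theorem sc_step (f : Perm α) (z : α) : f.SameCycle z (f z) := ⟨1, by simp⟩

theorem sc_equiv (f : Perm α) : Equivalence f.SameCycle :=
  ⟨fun x => SameCycle.refl f x, fun h => h.symm, fun h h' => h.trans h'⟩

variable [DecidableEq α]

theorem merge_xy [Finite α] (σ : Perm α) {x y : α} (h : ¬ σ.SameCycle x y) :
    (swap x y * σ).SameCycle x y := by
  classical
  have hex : ∃ i, 0 < i ∧ (σ ^ i) x = x := by
    obtain ⟨i, hi, h2⟩ := (isOfFinOrder_of_finite σ).exists_pow_eq_one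
    exact ⟨i, hi, by simp [h2]⟩
  obtain ⟨hi, hix⟩ := Nat.find_spec hex
  have hmin := fun m (hm : m < Nat.find hex) => Nat.find_min hex hm
  generalize Nat.find hex = i at hi hix hmin
  have key : ∀ j, j < i → ((swap x y * σ) ^ j) x = (σ ^ j) x := by
    intro j
    induction j with
    | zero => simp
    | succ j ih =>
      intro hj
      rw [pow_succ', Perm.mul_apply, ih (by omega), Perm.mul_apply, ← Perm.mul_apply σ, ← pow_succ']
      apply swap_apply_of_ne_of_ne
      · intro h1; exact hmin _ hj ⟨by omega, h1⟩
      · intro h1; exact h ⟨(j+1 : ℕ), by rw [zpow_natCast]; exact h1⟩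
  obtain ⟨j, rfl⟩ : ∃ j, i = j + 1 := ⟨i - 1, by omega⟩
  refine ⟨(j+1 : ℕ), ?_⟩
  rw [zpow_natCast, pow_succ', Perm.mul_apply, key j (by omega), Perm.mul_apply, ← Perm.mul_apply σ,
    ← pow_succ', hix, swap_apply_left]

theorem merge_iff [Finite α] (σ : Perm α) {x y : α} (h : ¬ σ.SameCycle x y) (u v : α) :
    (swap x y * σ).SameCycle u v ↔ (σ.SameCycle u v ∨
      ((σ.SameCycle x u ∨ σ.SameCycle y u) ∧ (σ.SameCycle x v ∨ σ.SameCycle y v))) := by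
  have E := sc_equiv σ
  have E' := sc_equiv (swap x y * σ)
  constructor
  · apply sc_le_rel _ (fun u v => σ.SameCycle u v ∨
      ((σ.SameCycle x u ∨ σ.SameCycle y u) ∧ (σ.SameCycle x v ∨ σ.SameCycle y v)))
    · refine ⟨fun a => Or.inl (E.refl a), ?_, ?_⟩
      · rintro a b (h1 | h1)
        · exact Or.inl h1.symm
        · exact Or.inr ⟨h1.2, h1.1⟩
      · rintro a b c (h1 | ⟨h1, h1'⟩) (h2 | ⟨h2, h2'⟩)
        · exact Or.inl (h1.trans h2)
        · exact Or.inr ⟨h2.imp (fun t => t.trans h1.symm) (fun t => t.trans h1.symm), h2'⟩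
        · exact Or.inr ⟨h1, h1'.imp (fun t => t.trans h2) (fun t => t.trans h2)⟩
        · exact Or.inr ⟨h1, h2'⟩
    · intro z
      have hz := sc_step σ z
      rw [Perm.mul_apply]
      by_cases h1 : σ z = x
      · rw [h1, swap_apply_left]
        rw [h1] at hz
        exact Or.inr ⟨Or.inl hz.symm, Or.inr (E.refl y)⟩
      by_cases h2 : σ z = y
      · rw [h2, swap_apply_right]
        rw [h2] at hz
        exact Or.inr ⟨Or.inr hz.symm, Or.inl (E.refl x)⟩
      rw [swap_apply_of_ne_of_ne h1 h2]
      exact Or.inl hz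
  · have hxy := merge_xy σ h
    have hs : ∀ {u v}, σ.SameCycle u v → (swap x y * σ).SameCycle u v := by
      intro u v
      apply sc_le_rel _ _ E'
      intro z
      have hz := sc_step (swap x y * σ) z
      rw [Perm.mul_apply] at hz
      by_cases h1 : σ z = x
      · rw [h1, swap_apply_left] at hz
        rw [h1]; exact hz.trans hxy.symm
      by_cases h2 : σ z = y
      · rw [h2, swap_apply_right] at hz
        rw [h2]; exact hz.trans hxy
      rwa [swap_apply_of_ne_of_ne h1 h2] at hz
    have hx : ∀ w, (σ.SameCycle x w ∨ σ.SameCycle y w) → (swap x y * σ).SameCycle x w := by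
      rintro w (h1 | h1)
      · exact hs h1
      · exact hxy.trans (hs h1)
    rintro (h1 | ⟨h1, h2⟩)
    · exact hs h1
    · exact (hx _ h1).symm.trans (hx _ h2)

theorem cut_xy [Finite α] (σ : Perm α) {x y : α} (hne : x ≠ y) (h : σ.SameCycle x y) :
    ¬ (swap x y * σ).SameCycle x y := by
  classical
  have hex : ∃ i, (σ ^ i) x = y := by
    obtain ⟨i, -, h2⟩ := h.exists_pow_eq'
    exact ⟨i, h2⟩
  have hix := Nat.find_spec hex
  have hmin := fun m (hm : m < Nat.find hex) => Nat.find_min hex hm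
  generalize Nat.find hex = i at hix hmin
  have hi : 0 < i := by
    rcases Nat.eq_zero_or_pos i with rfl | h'
    · exact absurd (by simpa using hix) hne
    · exact h'
  have hnx : ∀ j, 0 < j → j < i → (σ ^ j) x ≠ x := by
    intro j hj hji hx
    apply hmin (i - j) (by omega)
    rw [← hix]
    conv_rhs => rw [show i = (i - j) + j by omega, pow_add, Perm.mul_apply, hx]
  have key : ∀ j, j < i → ((swap x y * σ) ^ j) x = (σ ^ j) x := by
    intro j
    induction j with
    | zero => simp
    | succ j ih =>
      intro hj
      rw [pow_succ', Perm.mul_apply, ih (by omega), Perm.mul_apply, ← Perm.mul_apply σ, ← pow_succ']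
      apply swap_apply_of_ne_of_ne
      · exact hnx _ (by omega) hj
      · exact hmin _ hj
  have hper : ((swap x y * σ) ^ i) x = x := by
    obtain ⟨j, rfl⟩ : ∃ j, i = j + 1 := ⟨i - 1, by omega⟩
    rw [pow_succ', Perm.mul_apply, key j (by omega), Perm.mul_apply, ← Perm.mul_apply σ,
    ← pow_succ', hix, swap_apply_right]
  have all : ∀ m, ∃ j, j < i ∧ ((swap x y * σ) ^ m) x = (σ ^ j) x := by
    intro m
    induction m with
    | zero => exact ⟨0, hi, by simp⟩
    | succ m ih =>
      obtain ⟨j, hj, hm⟩ := ih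
      rw [pow_succ', Perm.mul_apply, hm, ← key j hj, ← Perm.mul_apply, ← pow_succ']
      rcases Nat.lt_or_ge (j+1) i with h1 | h1
      · exact ⟨j+1, h1, key _ h1⟩
      · obtain rfl : i = j + 1 := by omega
        exact ⟨0, hi, by simpa using hper⟩
  intro hc
  obtain ⟨m, -, hm⟩ := hc.exists_pow_eq'
  obtain ⟨j, hj, h1⟩ := all m
  exact hmin j hj (h1.symm.trans hm)

end Gen

section Orb
variable {α : Type*} [Fintype α] [DecidableEq α]

open Classical in
noncomputable def orb (σ : Perm α) (x : α) : Finset α := univ.filter (fun y => σ.SameCycle x y)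

noncomputable def orbs (σ : Perm α) : Finset (Finset α) := univ.image (orb σ)

noncomputable def nc (σ : Perm α) : ℕ := (orbs σ).card

noncomputable def PP (σ : Perm α) : ℚ := ∏ O ∈ orbs σ, (O.card : ℚ)

noncomputable def oc (σ : Perm α) (x : α) : ℚ := ((orb σ x).card : ℚ)

theorem mem_orb (σ : Perm α) (x y : α) : y ∈ orb σ x ↔ σ.SameCycle x y := by simp [orb]

theorem orb_eq (σ : Perm α) {x y : α} : orb σ x = orb σ y ↔ σ.SameCycle x y := by
  constructor
  · intro h
    rw [← mem_orb, h, mem_orb]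
  · intro h
    ext z
    rw [mem_orb, mem_orb]
    exact ⟨fun t => h.symm.trans t, fun t => h.trans t⟩

theorem oc_pos (σ : Perm α) (x : α) : 0 < oc σ x := by
  unfold oc
  exact_mod_cast Finset.card_pos.mpr ⟨x, (mem_orb _ _ _).2 (SameCycle.refl _ _)⟩

theorem PP_pos (σ : Perm α) : 0 < PP σ := by
  unfold PP
  apply Finset.prod_pos
  intro O hO
  obtain ⟨x, -, rfl⟩ := Finset.mem_image.1 hO
  exact oc_pos σ x

theorem sum_inv_oc (σ : Perm α) : ∑ x, (oc σ x)⁻¹ = nc σ := by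
  have h := Finset.sum_fiberwise_of_maps_to (s := (univ : Finset α)) (t := orbs σ) (g := orb σ)
    (fun x _ => Finset.mem_image_of_mem _ (Finset.mem_univ x)) (fun x => (oc σ x)⁻¹)
  rw [← h]
  have : ∀ O ∈ orbs σ, ∑ x ∈ univ.filter (fun x => orb σ x = O), (oc σ x)⁻¹ = 1 := by
    intro O hO
    obtain ⟨y, -, rfl⟩ := Finset.mem_image.1 hO
    have h1 : univ.filter (fun x => orb σ x = orb σ y) = orb σ y := by
      ext z
      rw [Finset.mem_filter, orb_eq, mem_orb]
      exact ⟨fun t => t.2.symm, fun t => ⟨Finset.mem_univ _, t.symm⟩⟩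
    rw [h1, Finset.sum_congr rfl (g := fun _ => (oc σ y)⁻¹)]
    · rw [Finset.sum_const, nsmul_eq_mul]
      exact mul_inv_cancel₀ (oc_pos σ y).ne'
    · intro x hx
      rw [mem_orb, ← orb_eq] at hx
      unfold oc
      rw [hx]
  rw [Finset.sum_congr rfl this]
  simp [nc]

theorem orb_merge (σ : Perm α) {x y : α} (h : ¬ σ.SameCycle x y) (u : α) :
    orb (swap x y * σ) u = if σ.SameCycle x u ∨ σ.SameCycle y u then orb σ x ∪ orb σ y
      else orb σ u := by
  ext v
  rw [mem_orb, merge_iff σ h]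
  split_ifs with h1
  · rw [Finset.mem_union, mem_orb, mem_orb]
    constructor
    · rintro (h2 | h2)
      · exact h1.imp (fun t => t.trans h2) (fun t => t.trans h2)
      · exact h2.2
    · exact fun h2 => Or.inr ⟨h1, h2⟩
  · rw [mem_orb]
    tauto

theorem orbs_merge (σ : Perm α) {x y : α} (h : ¬ σ.SameCycle x y) :
    orbs (swap x y * σ) = insert (orb σ x ∪ orb σ y) (((orbs σ).erase (orb σ x)).erase (orb σ y)) := by
  ext O
  simp only [orbs, Finset.mem_insert, Finset.mem_erase, Finset.mem_image, Finset.mem_univ, true_and]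
  constructor
  · rintro ⟨u, rfl⟩
    rw [orb_merge σ h]
    split_ifs with h1
    · exact Or.inl rfl
    · push Not at h1
      refine Or.inr ⟨?_, ?_, u, rfl⟩
      · rw [Ne, orb_eq]; exact fun t => h1.2 t.symm
      · rw [Ne, orb_eq]; exact fun t => h1.1 t.symm
  · rintro (rfl | ⟨h1, h2, u, rfl⟩)
    · refine ⟨x, ?_⟩
      rw [orb_merge σ h, if_pos (Or.inl (SameCycle.refl _ _))]
    · refine ⟨u, ?_⟩
      rw [orb_merge σ h, if_neg]
      rw [Ne, orb_eq] at h1 h2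
      rintro (t | t)
      · exact h2 t.symm
      · exact h1 t.symm

theorem union_notMem (σ : Perm α) {x y : α} :
    orb σ x ∪ orb σ y ∉ (((orbs σ).erase (orb σ x)).erase (orb σ y)) := by
  simp only [orbs, Finset.mem_erase, Finset.mem_image, Finset.mem_univ, true_and]
  rintro ⟨h1, h2, u, hu⟩
  have : x ∈ orb σ u := by
    rw [hu, Finset.mem_union, mem_orb]; exact Or.inl (SameCycle.refl _ _)
  rw [mem_orb, ← orb_eq] at this
  exact h2 (hu.symm.trans this)

theorem orb_mem (σ : Perm α) (x : α) : orb σ x ∈ orbs σ :=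
  Finset.mem_image_of_mem _ (Finset.mem_univ x)

theorem orb_mem' (σ : Perm α) {x y : α} (h : ¬ σ.SameCycle x y) :
    orb σ y ∈ (orbs σ).erase (orb σ x) := by
  rw [Finset.mem_erase]
  exact ⟨fun t => h ((orb_eq σ).1 t).symm, orb_mem σ y⟩

theorem nc_merge (σ : Perm α) {x y : α} (h : ¬ σ.SameCycle x y) :
    nc (swap x y * σ) + 1 = nc σ := by
  unfold nc
  rw [orbs_merge σ h, Finset.card_insert_of_notMem (union_notMem σ),
    Finset.card_erase_add_one (orb_mem' σ h), Finset.card_erase_add_one (orb_mem σ x)]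

theorem PP_merge (σ : Perm α) {x y : α} (h : ¬ σ.SameCycle x y) :
    PP (swap x y * σ) = PP σ * ((oc σ x)⁻¹ + (oc σ y)⁻¹) := by
  have hd : Disjoint (orb σ x) (orb σ y) := by
    rw [Finset.disjoint_left]
    intro z h1 h2
    rw [mem_orb] at h1 h2
    exact h (h1.trans h2.symm)
  have e1 := Finset.mul_prod_erase (orbs σ) (fun O => (O.card : ℚ)) (orb_mem σ x)
  have e2 := Finset.mul_prod_erase _ (fun O => (O.card : ℚ)) (orb_mem' σ h)
  have hx := (oc_pos σ x).ne'
  have hy := (oc_pos σ y).ne'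
  unfold PP
  rw [orbs_merge σ h, Finset.prod_insert (union_notMem σ), ← e1, ← e2,
    Finset.card_union_of_disjoint hd]
  unfold oc at *
  push_cast
  field_simp
  ring

theorem nc_cut (σ : Perm α) {x y : α} (hne : x ≠ y) (h : σ.SameCycle x y) :
    nc (swap x y * σ) = nc σ + 1 := by
  have := nc_merge _ (cut_xy σ hne h)
  rw [← mul_assoc, swap_mul_self, one_mul] at this
  exact this.symm

end Orb

section Swaps
variable {α : Type*} [Fintype α] [DecidableEq α]

open Classical in
noncomputable def swaps (α : Type*) [Fintype α] [DecidableEq α] : Finset (Perm α) :=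
  univ.filter (fun f => f.IsSwap)

theorem mem_swaps (f : Perm α) : f ∈ swaps α ↔ f.IsSwap := by simp [swaps]

theorem swap_eq_swap_cases {x y a b : α} (hab : a ≠ b) (h : swap x y = swap a b) :
    (x = a ∧ y = b) ∨ (x = b ∧ y = a) := by
  have h1 : swap x y a = b := by rw [h, swap_apply_left]
  rw [swap_apply_def] at h1
  split_ifs at h1 with h2 h3
  · exact Or.inl ⟨h2.symm, h1⟩
  · exact Or.inr ⟨h1, h3.symm⟩
  · exact absurd h1 hab

theorem sum_swaps (g : Perm α → ℚ) :
    2 * ∑ τ ∈ swaps α, g τ = ∑ q ∈ (univ : Finset α).offDiag, g (swap q.1 q.2) := by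
  have h := Finset.sum_fiberwise_of_maps_to (s := (univ : Finset α).offDiag) (t := swaps α)
    (g := fun q => swap q.1 q.2)
    (fun q hq => by
      rw [mem_swaps]
      exact ⟨q.1, q.2, (Finset.mem_offDiag.1 hq).2.2, rfl⟩) (fun q => g (swap q.1 q.2))
  rw [← h, Finset.mul_sum]
  apply Finset.sum_congr rfl
  intro τ hτ
  rw [mem_swaps] at hτ
  obtain ⟨a, b, hab, rfl⟩ := hτ
  have h1 : (univ : Finset α).offDiag.filter (fun q => swap q.1 q.2 = swap a b)
      = {(a, b), (b, a)} := by
    ext ⟨x, y⟩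
    simp only [Finset.mem_filter, Finset.mem_offDiag, Finset.mem_univ, true_and,
      Finset.mem_insert, Finset.mem_singleton, Prod.mk.injEq]
    constructor
    · rintro ⟨-, h2⟩
      exact swap_eq_swap_cases hab h2
    · rintro (⟨rfl, rfl⟩ | ⟨rfl, rfl⟩)
      · exact ⟨hab, rfl⟩
      · exact ⟨hab.symm, swap_comm _ _⟩
  rw [h1, Finset.sum_pair]
  · simp only [swap_comm b a]; ring
  · intro h2; exact hab (congrArg Prod.fst h2)

theorem sum_merge (σ : Perm α) :
    ∑ τ ∈ swaps α, (if nc (τ * σ) + 1 = nc σ then PP (τ * σ) else 0)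
      = (Fintype.card α : ℚ) * ((nc σ : ℚ) - 1) * PP σ := by
  classical
  have h2 := sum_swaps (fun τ => if nc (τ * σ) + 1 = nc σ then PP (τ * σ) else 0)
  have h3 : ∑ q ∈ (univ : Finset α).offDiag,
      (if nc (swap q.1 q.2 * σ) + 1 = nc σ then PP (swap q.1 q.2 * σ) else 0)
      = ∑ q ∈ (univ : Finset α) ×ˢ (univ : Finset α),
        if σ.SameCycle q.1 q.2 then 0 else PP σ * ((oc σ q.1)⁻¹ + (oc σ q.2)⁻¹) := by
    have : (univ : Finset α).offDiag ⊆ (univ : Finset α) ×ˢ (univ : Finset α) := by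
      intro q _; simp
    rw [← Finset.sum_subset this]
    · apply Finset.sum_congr rfl
      intro q hq
      have hne := (Finset.mem_offDiag.1 hq).2.2
      by_cases hs : σ.SameCycle q.1 q.2
      · rw [if_pos hs, if_neg]
        rw [nc_cut σ hne hs]; omega
      · rw [if_neg hs, if_pos (nc_merge σ hs), PP_merge σ hs]
    · intro q _ hq
      rw [Finset.mem_offDiag] at hq
      have : q.1 = q.2 := by
        by_contra hne; exact hq ⟨Finset.mem_univ _, Finset.mem_univ _, hne⟩
      rw [if_pos]
      rw [this]
  have h4 : ∀ x, ∑ y, (if σ.SameCycle x y then 0 else (oc σ x)⁻¹)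
      = (Fintype.card α : ℚ) * (oc σ x)⁻¹ - 1 := by
    intro x
    have e : ∀ y, (if σ.SameCycle x y then 0 else (oc σ x)⁻¹)
      = (oc σ x)⁻¹ - (if σ.SameCycle x y then (oc σ x)⁻¹ else 0) := by
      intro y; split_ifs <;> simp
    rw [Finset.sum_congr rfl (fun y _ => e y), Finset.sum_sub_distrib, Finset.sum_const,
      ← Finset.sum_filter, Finset.sum_const, nsmul_eq_mul, nsmul_eq_mul]
    have : univ.filter (fun y => σ.SameCycle x y) = orb σ x := by ext z; simp [mem_orb]
    rw [this, Finset.card_univ]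
    congr 1
    exact mul_inv_cancel₀ (oc_pos σ x).ne'
  have h5 : ∑ x, ∑ y, (if σ.SameCycle x y then 0 else (oc σ x)⁻¹)
      = (Fintype.card α : ℚ) * ((nc σ : ℚ) - 1) := by
    rw [Finset.sum_congr rfl (fun x _ => h4 x), Finset.sum_sub_distrib, ← Finset.mul_sum,
      sum_inv_oc]
    simp; ring
  have h6 : ∑ x, ∑ y, (if σ.SameCycle x y then 0 else (oc σ y)⁻¹)
      = (Fintype.card α : ℚ) * ((nc σ : ℚ) - 1) := by
    rw [Finset.sum_comm, ← h5]
    simp only [sameCycle_comm]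
  rw [h3, Finset.sum_product] at h2
  have h7 : ∀ x y, (if σ.SameCycle x y then 0 else PP σ * ((oc σ x)⁻¹ + (oc σ y)⁻¹))
     = PP σ * (if σ.SameCycle x y then 0 else (oc σ x)⁻¹) +
       PP σ * (if σ.SameCycle x y then 0 else (oc σ y)⁻¹) := by
    intro x y; split_ifs <;> ring
  simp only [h7, Finset.sum_add_distrib, ← Finset.mul_sum, h5, h6] at h2
  linarith

open Classical in
noncomputable def NN : ℕ → Perm α → ℚ
  | 0, σ => if nc σ = 1 then 1 else 0
  | k+1, σ => ∑ τ ∈ swaps α, NN k (τ * σ)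

theorem nc_swap_cases (σ τ : Perm α) (h : τ.IsSwap) :
    nc (τ * σ) + 1 = nc σ ∨ nc (τ * σ) = nc σ + 1 := by
  obtain ⟨x, y, hne, rfl⟩ := h
  by_cases hs : σ.SameCycle x y
  · exact Or.inr (nc_cut σ hne hs)
  · exact Or.inl (nc_merge σ hs)

theorem NN_zero (k : ℕ) : ∀ σ : Perm α, k + 1 < nc σ → NN k σ = 0 := by
  induction k with
  | zero => intro σ h; simp only [NN]; rw [if_neg (by omega)]
  | succ k ih =>
    intro σ h
    simp only [NN]
    apply Finset.sum_eq_zero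
    intro τ hτ
    apply ih
    rcases nc_swap_cases σ τ ((mem_swaps τ).1 hτ) with h1 | h1 <;> omega

theorem NN_formula (k : ℕ) : ∀ σ : Perm α, nc σ = k + 1 →
    (Fintype.card α : ℚ) * NN k σ = (k.factorial : ℚ) * (Fintype.card α : ℚ) ^ k * PP σ := by
  induction k with
  | zero =>
    intro σ h
    simp only [NN]
    rw [if_pos (by omega)]
    unfold nc at h
    obtain ⟨O, hO⟩ := Finset.card_eq_one.1 (by simpa using h)
    have hu : O = univ := by
      ext z
      have := orb_mem σ z
      rw [hO, Finset.mem_singleton] at this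
      rw [← this, mem_orb]
      simp [SameCycle.refl]
    unfold PP
    rw [hO, hu]
    simp
  | succ k ih =>
    intro σ h
    simp only [NN]
    have e : ∀ τ ∈ swaps α, (Fintype.card α : ℚ) * NN k (τ * σ)
        = (k.factorial : ℚ) * (Fintype.card α : ℚ) ^ k *
          (if nc (τ * σ) + 1 = nc σ then PP (τ * σ) else 0) := by
      intro τ hτ
      rcases nc_swap_cases σ τ ((mem_swaps τ).1 hτ) with h1 | h1
      · rw [if_pos h1, ih _ (by omega)]
      · rw [if_neg (by omega), NN_zero _ _ (by omega)]; simp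
    rw [Finset.mul_sum, Finset.sum_congr rfl e, ← Finset.mul_sum, sum_merge, h,
      Nat.factorial_succ]
    push_cast
    ring

open Classical in
theorem NN_card (k : ℕ) : ∀ σ : Perm α, NN k σ =
    ∑ τ : Fin k → Perm α, if (∀ l, (τ l).IsSwap) ∧ nc ((List.ofFn τ).prod * σ) = 1
      then (1 : ℚ) else 0 := by
  induction k with
  | zero => intro σ; simp [NN]
  | succ k ih =>
    intro σ
    simp only [NN]
    rw [← (Fin.snocEquiv (fun _ => Perm α)).sum_comp, Fintype.sum_prod_type, swaps,
      Finset.sum_filter]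
    apply Finset.sum_congr rfl
    intro τ _
    split_ifs with h
    · rw [ih]
      apply Finset.sum_congr rfl
      intro t _
      have hp : (List.ofFn ((Fin.snocEquiv (fun _ : Fin (k+1) => Perm α)) (τ, t))).prod
          = (List.ofFn t).prod * τ := by
        rw [List.ofFn_succ']
        simp [Fin.snocEquiv]
      rw [hp, mul_assoc]
      simp [Fin.snocEquiv, Fin.forall_fin_succ', h]
    · symm
      apply Finset.sum_eq_zero
      intro t _
      rw [if_neg]
      simp [Fin.snocEquiv, Fin.forall_fin_succ', h]

end Swaps

def ext0 {n : ℕ} (e : Perm (Fin n)) : Perm (Fin (n+1)) := decomposeFin.symm (0, e)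

theorem ext0_zero {n : ℕ} (e : Perm (Fin n)) : ext0 e 0 = 0 := by simp [ext0]

theorem ext0_succ {n : ℕ} (e : Perm (Fin n)) (a : Fin n) : ext0 e a.succ = (e a).succ := by
  simp [ext0]

theorem dec_eq {n : ℕ} (i : Fin (n+1)) (e : Perm (Fin n)) :
    decomposeFin.symm (i, e) = swap 0 i * ext0 e := by
  ext x
  refine Fin.cases ?_ (fun a => ?_) x
  · simp [ext0_zero]
  · rw [Perm.mul_apply, ext0_succ, decomposeFin_symm_apply_succ]

theorem ext0_rel {n : ℕ} (e : Perm (Fin n)) {u v : Fin (n+1)} (h : (ext0 e).SameCycle u v) :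
    (u = 0 ∧ v = 0) ∨ ∃ a b, u = Fin.succ a ∧ v = Fin.succ b ∧ e.SameCycle a b := by
  revert h
  apply sc_le_rel _ (fun u v => (u = 0 ∧ v = 0) ∨
    ∃ a b, u = Fin.succ a ∧ v = Fin.succ b ∧ e.SameCycle a b)
  · refine ⟨?_, ?_, ?_⟩
    · intro x
      refine Fin.cases ?_ (fun a => ?_) x
      · exact Or.inl ⟨rfl, rfl⟩
      · exact Or.inr ⟨a, a, rfl, rfl, SameCycle.refl _ _⟩
    · rintro x y (⟨rfl, rfl⟩ | ⟨a, b, rfl, rfl, h⟩)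
      · exact Or.inl ⟨rfl, rfl⟩
      · exact Or.inr ⟨b, a, rfl, rfl, h.symm⟩
    · rintro x y z (⟨rfl, rfl⟩ | ⟨a, b, rfl, rfl, h⟩) (⟨h1, rfl⟩ | ⟨a', b', h1, rfl, h'⟩)
      · exact Or.inl ⟨rfl, rfl⟩
      · exact absurd h1.symm (Fin.succ_ne_zero _)
      · exact absurd h1 (Fin.succ_ne_zero _)
      · obtain rfl := Fin.succ_injective _ h1
        exact Or.inr ⟨a, b', rfl, rfl, h.trans h'⟩
  · intro z
    refine Fin.cases ?_ (fun a => ?_) z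
    · exact Or.inl ⟨rfl, ext0_zero e⟩
    · exact Or.inr ⟨a, e a, rfl, ext0_succ e a, sc_step e a⟩

theorem ext0_sc {n : ℕ} (e : Perm (Fin n)) (a b : Fin n) :
    (ext0 e).SameCycle a.succ b.succ ↔ e.SameCycle a b := by
  constructor
  · intro h
    rcases ext0_rel e h with ⟨h1, -⟩ | ⟨a', b', h1, h2, h3⟩
    · exact absurd h1 (Fin.succ_ne_zero _)
    · obtain rfl := Fin.succ_injective _ h1
      obtain rfl := Fin.succ_injective _ h2
      exact h3
  · apply sc_le_rel _ (fun a b => (ext0 e).SameCycle (Fin.succ a) (Fin.succ b))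
    · exact ⟨fun _ => SameCycle.refl _ _, fun h => h.symm, fun h h' => h.trans h'⟩
    · intro z
      rw [← ext0_succ]
      exact sc_step _ _

theorem ext0_sc0 {n : ℕ} (e : Perm (Fin n)) (b : Fin n) :
    ¬ (ext0 e).SameCycle 0 b.succ := by
  intro h
  rcases ext0_rel e h with ⟨-, h1⟩ | ⟨a', b', h1, h2, h3⟩
  · exact absurd h1 (Fin.succ_ne_zero _)
  · exact absurd h1.symm (Fin.succ_ne_zero _)

theorem orb_ext0_zero {n : ℕ} (e : Perm (Fin n)) : orb (ext0 e) 0 = {0} := by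
  ext z
  rw [mem_orb, Finset.mem_singleton]
  refine Fin.cases ?_ (fun a => ?_) z
  · simp [SameCycle.refl]
  · simp [ext0_sc0]

theorem orb_ext0_succ {n : ℕ} (e : Perm (Fin n)) (a : Fin n) :
    orb (ext0 e) a.succ = (orb e a).map (Fin.succEmb n) := by
  ext z
  rw [mem_orb]
  refine Fin.cases ?_ (fun b => ?_) z
  · have : ¬ (ext0 e).SameCycle a.succ 0 := fun h => ext0_sc0 e a h.symm
    simp [this]
  · simp [ext0_sc, mem_orb]

theorem orbs_ext0 {n : ℕ} (e : Perm (Fin n)) :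
    orbs (ext0 e) = insert {0} ((orbs e).map (Finset.mapEmbedding (Fin.succEmb n)).toEmbedding) := by
  ext O
  simp only [orbs, Finset.mem_insert, Finset.mem_map, Finset.mem_image, Finset.mem_univ, true_and,
    Fin.exists_fin_succ, orb_ext0_zero, orb_ext0_succ]
  constructor
  · rintro (h | ⟨i, rfl⟩)
    · exact Or.inl h.symm
    · exact Or.inr ⟨_, ⟨i, rfl⟩, rfl⟩
  · rintro (h | ⟨_, ⟨i, rfl⟩, rfl⟩)
    · exact Or.inl h.symm
    · exact Or.inr ⟨i, rfl⟩

theorem zero_notMem {n : ℕ} (e : Perm (Fin n)) :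
    {0} ∉ ((orbs e).map (Finset.mapEmbedding (Fin.succEmb n)).toEmbedding) := by
  rw [Finset.mem_map]
  rintro ⟨O, -, h⟩
  have : (0 : Fin (n+1)) ∈ O.map (Fin.succEmb n) := by
    have h' : O.map (Fin.succEmb n) = {0} := h
    rw [h']; simp
  simp at this

theorem nc_ext0 {n : ℕ} (e : Perm (Fin n)) : nc (ext0 e) = nc e + 1 := by
  unfold nc
  rw [orbs_ext0, Finset.card_insert_of_notMem (zero_notMem e), Finset.card_map]

theorem PP_ext0 {n : ℕ} (e : Perm (Fin n)) : PP (ext0 e) = PP e := by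
  unfold PP
  rw [orbs_ext0, Finset.prod_insert (zero_notMem e), Finset.prod_map]
  simp

theorem oc_ext0 {n : ℕ} (e : Perm (Fin n)) (a : Fin n) : oc (ext0 e) a.succ = oc e a := by
  unfold oc
  rw [orb_ext0_succ, Finset.card_map]

theorem oc_ext0_zero {n : ℕ} (e : Perm (Fin n)) : oc (ext0 e) 0 = 1 := by
  unfold oc
  rw [orb_ext0_zero]; simp

noncomputable def Lah (n p : ℕ) : ℚ := ∑ σ : Perm (Fin n), if nc σ = p then PP σ else 0

theorem nc_pos {n : ℕ} (σ : Perm (Fin (n+1))) : 0 < nc σ :=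
  Finset.card_pos.2 ⟨_, orb_mem σ 0⟩

theorem Lah_succ_zero (n : ℕ) : Lah (n+1) 0 = 0 := by
  unfold Lah
  apply Finset.sum_eq_zero
  intro σ _
  rw [if_neg (nc_pos σ).ne']

theorem Lah_zero (p : ℕ) : Lah 0 p = if p = 0 then 1 else 0 := by
  have h : ∀ σ : Perm (Fin 0), orbs σ = ∅ := by intro σ; simp [orbs]
  unfold Lah
  simp only [nc, PP, h]
  simp [eq_comm]

theorem Lah_succ (n p : ℕ) :
    Lah (n+1) (p+1) = ((n : ℚ) + p + 1) * Lah n (p+1) + Lah n p := by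
  unfold Lah
  rw [← decomposeFin.symm.sum_comp, Fintype.sum_prod_type, Finset.sum_comm, Finset.mul_sum,
    ← Finset.sum_add_distrib]
  apply Finset.sum_congr rfl
  intro e _
  rw [Fin.sum_univ_succ]
  have h0 : decomposeFin.symm ((0 : Fin (n+1)), e) = ext0 e := rfl
  rw [h0, nc_ext0, PP_ext0, add_comm]
  simp only [add_left_inj]
  have h1 : ∀ i : Fin n, (if nc (decomposeFin.symm (i.succ, e)) = p + 1 then
      PP (decomposeFin.symm (i.succ, e)) else 0) =
      (if nc e = p + 1 then PP e * (1 + (oc e i)⁻¹) else 0) := by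
    intro i
    have hm := nc_merge _ (ext0_sc0 e i)
    rw [nc_ext0, add_left_inj] at hm
    rw [dec_eq, hm, PP_merge _ (ext0_sc0 e i), PP_ext0, oc_ext0, oc_ext0_zero, inv_one]
  rw [Finset.sum_congr rfl (fun i _ => h1 i)]
  split_ifs with h
  · rw [← Finset.mul_sum, Finset.sum_add_distrib, sum_inv_oc, h]
    simp
    ring
  · simp

theorem Lah_formula (n : ℕ) : ∀ p, ((p+1).factorial : ℚ) * Lah (n+1) (p+1)
    = ((n+1).factorial : ℚ) * (n.choose p : ℚ) := by
  induction n with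
  | zero =>
    intro p
    rw [Lah_succ, Lah_zero, Lah_zero]
    rcases p with _ | p <;> simp
  | succ n ih =>
    intro p
    rw [Lah_succ]
    rcases p with _ | q
    · rw [Lah_succ_zero]
      have := ih 0
      simp only [zero_add, Nat.factorial_one, Nat.cast_one, one_mul, Nat.choose_zero_right,
        mul_one] at this ⊢
      rw [this, Nat.factorial_succ (n+1)]
      push_cast
      ring
    · have h1 := ih (q+1)
      have h2 := ih q
      have h3 := Nat.add_one_mul_choose_eq n q
      have h4 := Nat.choose_succ_succ' n q
      have h3' : ((n:ℚ)+1) * (n.choose q) = ((n.choose q : ℚ) + (n.choose (q+1))) * (q+1) := by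
        rw [h4] at h3
        exact_mod_cast h3
      rw [h4]
      rw [mul_add, mul_left_comm, h1, Nat.factorial_succ (q+1), Nat.factorial_succ (n+1)]
      push_cast
      rw [mul_assoc _ _ (Lah (n+1) (q+1)), h2]
      linear_combination (-((n+1).factorial : ℚ)) * h3'

theorem cycleCount_eq {n : ℕ} (σ : Perm (Fin n)) : cycleCount σ = nc σ := by
  classical
  unfold cycleCount nc
  have h : {x : Fin n | ∀ y, σ.SameCycle x y → x ≤ y}
      = ((univ.filter (fun x : Fin n => ∀ y, σ.SameCycle x y → x ≤ y) : Finset (Fin n)) : Set (Fin n)) := by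
    ext x; simp
  rw [h, Set.ncard_coe_finset]
  apply Finset.card_bij (fun x _ => orb σ x)
  · intro x _; exact orb_mem σ x
  · intro x hx y hy hxy
    rw [orb_eq] at hxy
    simp only [Finset.mem_filter, Finset.mem_univ, true_and] at hx hy
    exact le_antisymm (hx y hxy) (hy x hxy.symm)
  · intro O hO
    obtain ⟨z, -, rfl⟩ := Finset.mem_image.1 hO
    have hne : (orb σ z).Nonempty := ⟨z, (mem_orb _ _ _).2 (SameCycle.refl _ _)⟩
    have hm := Finset.min'_mem _ hne
    rw [mem_orb] at hm
    refine ⟨(orb σ z).min' hne, ?_, ((orb_eq σ).2 hm).symm⟩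
    simp only [Finset.mem_filter, Finset.mem_univ, true_and]
    intro y hy
    exact Finset.min'_le _ _ ((mem_orb _ _ _).2 (hm.trans hy))

section
variable {α : Type*} [Fintype α] [DecidableEq α]

theorem orb_conj (g σ : Perm α) (x : α) :
    orb (g * σ * g⁻¹) (g x) = (orb σ x).map g.toEmbedding := by
  ext z
  rw [mem_orb, sameCycle_conj, Finset.mem_map_equiv, mem_orb]
  simp

theorem nc_conj (g σ : Perm α) : nc (g * σ * g⁻¹) = nc σ := by
  unfold nc
  have : orbs (g * σ * g⁻¹) = (orbs σ).map (Finset.mapEmbedding g.toEmbedding).toEmbedding := by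
    ext O
    simp only [orbs, Finset.mem_map, Finset.mem_image, Finset.mem_univ, true_and]
    constructor
    · rintro ⟨x, rfl⟩
      refine ⟨_, ⟨g⁻¹ x, rfl⟩, ?_⟩
      have := orb_conj g σ (g⁻¹ x)
      rw [← Perm.mul_apply, mul_inv_cancel, Perm.one_apply] at this
      exact this.symm
    · rintro ⟨_, ⟨x, rfl⟩, rfl⟩
      exact ⟨g x, orb_conj g σ x⟩
  rw [this, Finset.card_map]

theorem isSwap_conj' (g τ : Perm α) : (g * τ * g⁻¹).IsSwap ↔ τ.IsSwap := by
  have key : ∀ g τ : Perm α, τ.IsSwap → (g * τ * g⁻¹).IsSwap := by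
    rintro g τ ⟨x, y, h, rfl⟩
    exact ⟨g x, g y, fun t => h (g.injective t), (Equiv.swap_apply_apply g x y).symm⟩
  constructor
  · intro h
    have := key g⁻¹ _ h
    simpa [mul_assoc] using this
  · exact key g τ

open Classical in
noncomputable def ff (k : ℕ) (c : Perm α) : ℚ :=
  ∑ τ : Fin k → Perm α, if (∀ l, (τ l).IsSwap) ∧ nc ((List.ofFn τ).prod⁻¹ * c) = k + 1
      then (1 : ℚ) else 0

theorem ff_conj (k : ℕ) (g c : Perm α) : ff k (g * c * g⁻¹) = ff k c := by
  classical
  unfold ff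
  rw [← (Equiv.arrowCongr (Equiv.refl (Fin k)) (MulAut.conj g).toEquiv).sum_comp]
  apply Finset.sum_congr rfl
  intro τ _
  have h1 : (List.ofFn ((Equiv.arrowCongr (Equiv.refl (Fin k)) (MulAut.conj g).toEquiv) τ)).prod
      = g * (List.ofFn τ).prod * g⁻¹ := by
    have := map_list_prod (MulAut.conj g) (List.ofFn τ)
    rw [List.map_ofFn, MulAut.conj_apply] at this
    rw [this]
    rfl
  have h2 : (g * (List.ofFn τ).prod * g⁻¹)⁻¹ * (g * c * g⁻¹)
    = g * ((List.ofFn τ).prod⁻¹ * c) * g⁻¹ := by group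
  have h3 : ∀ l, ((Equiv.arrowCongr (Equiv.refl (Fin k)) (MulAut.conj g).toEquiv) τ l).IsSwap
      ↔ (τ l).IsSwap := fun l => isSwap_conj' g (τ l)
  rw [h1, h2, nc_conj]
  simp only [h3]

theorem double_count (k : ℕ) :
    ∑ c : Perm α, (if nc c = 1 then ff k c else 0)
      = ∑ σ : Perm α, (if nc σ = k + 1 then NN k σ else 0) := by
  classical
  have h1 : ∀ c : Perm α, (if nc c = 1 then ff k c else 0) = ∑ τ : Fin k → Perm α,
      if nc c = 1 ∧ (∀ l, (τ l).IsSwap) ∧ nc ((List.ofFn τ).prod⁻¹ * c) = k + 1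
      then (1 : ℚ) else 0 := by
    intro c
    unfold ff
    split_ifs with h <;> simp [h]
  have h2 : ∀ σ : Perm α, (if nc σ = k + 1 then NN k σ else 0) = ∑ τ : Fin k → Perm α,
      if nc ((List.ofFn τ).prod * σ) = 1 ∧ (∀ l, (τ l).IsSwap) ∧ nc σ = k + 1
      then (1 : ℚ) else 0 := by
    intro σ
    rw [NN_card]
    split_ifs with h
    · simp [h, and_comm]
    · simp [h]
  rw [Finset.sum_congr rfl (fun c _ => h1 c), Finset.sum_congr rfl (fun c _ => h2 c),
    Finset.sum_comm, Finset.sum_comm (s := (univ : Finset (Perm α)))]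
  apply Finset.sum_congr rfl
  intro τ _
  rw [← Equiv.sum_comp (Equiv.mulLeft (List.ofFn τ).prod)]
  simp

theorem nc_one_sc {σ : Perm α} (h : nc σ = 1) (x y : α) : σ.SameCycle x y := by
  unfold nc at h
  rw [← orb_eq]
  exact Finset.card_le_one.1 h.le _ (orb_mem σ x) _ (orb_mem σ y)

theorem nc_one_of_sc [Nonempty α] {σ : Perm α} (h : ∀ x y, σ.SameCycle x y) : nc σ = 1 := by
  unfold nc
  apply le_antisymm
  · rw [Finset.card_le_one]
    intro a ha b hb
    obtain ⟨x, -, rfl⟩ := Finset.mem_image.1 ha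
    obtain ⟨y, -, rfl⟩ := Finset.mem_image.1 hb
    exact (orb_eq σ).2 (h x y)
  · exact Finset.card_pos.2 ⟨_, orb_mem σ (Classical.arbitrary α)⟩

theorem nc_one_conj {σ τ : Perm α} (h : nc σ = 1) (h' : nc τ = 1) : ∃ g, τ = g * σ * g⁻¹ := by
  rcases subsingleton_or_nontrivial α with hs | hs
  · exact ⟨1, Subsingleton.elim _ _⟩
  have mv : ∀ {σ : Perm α}, nc σ = 1 → ∀ x, σ x ≠ x := by
    intro σ h x hx
    obtain ⟨y, hy⟩ := exists_ne x
    exact hy ((nc_one_sc h x y).eq_of_left hx).symm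
  have cyc : ∀ {σ : Perm α}, nc σ = 1 → σ.IsCycle := by
    intro σ h
    obtain ⟨x, -⟩ := exists_pair_ne α
    exact ⟨x, mv h x, fun y _ => nc_one_sc h x y⟩
  have sup : ∀ {σ : Perm α}, nc σ = 1 → σ.support = univ := by
    intro σ h
    ext x; simp [mv h x]
  have := IsCycle.isConj (cyc h) (cyc h') (by rw [sup h, sup h'])
  obtain ⟨g, hg⟩ := isConj_iff.1 this
  exact ⟨g, hg.symm⟩

end

theorem rot_zpow (m : ℕ) (r : ℤ) (x : Fin (m+1)) :
    ((finRotate (m+1)) ^ r) x = x + r • (1 : Fin (m+1)) := by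
  induction r using Int.induction_on generalizing x with
  | zero => simp
  | succ i ih =>
    rw [zpow_add_one, Perm.mul_apply, finRotate_apply, ih, add_zsmul, one_zsmul]
    abel
  | pred i ih =>
    have h : (finRotate (m+1))⁻¹ x = x - 1 := by
      rw [Perm.inv_eq_iff_eq, finRotate_apply]; simp
    rw [zpow_sub_one, Perm.mul_apply, h, ih, sub_zsmul, one_zsmul]
    abel

theorem val_zsmul (m : ℕ) (t : Fin (m+1)) : ((t.val : ℕ) : ℤ) • (1 : Fin (m+1)) = t := by
  rw [natCast_zsmul]
  open Fin.CommRing in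
  rw [nsmul_one, Fin.cast_val_eq_self]

theorem nc_rot (m : ℕ) : nc (finRotate (m+1)) = 1 := by
  apply nc_one_of_sc
  intro x y
  refine ⟨((y - x : Fin (m+1)).val : ℤ), ?_⟩
  rw [rot_zpow, val_zsmul]
  simp

theorem ff_formula (m k : ℕ) :
    ((m+1 : ℕ) : ℚ) * ff k (finRotate (m+1)) = ((m+1 : ℕ) : ℚ) ^ k * ((m+1).choose (k+1) : ℚ) := by
  have dc := double_count (α := Fin (m+1)) k
  have h1 : ∑ c : Perm (Fin (m+1)), (if nc c = 1 then ff k c else 0)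
      = (∑ c : Perm (Fin (m+1)), (if nc c = 1 then (1 : ℚ) else 0)) * ff k (finRotate (m+1)) := by
    rw [Finset.sum_mul]
    apply Finset.sum_congr rfl
    intro c _
    split_ifs with h
    · obtain ⟨g, rfl⟩ := nc_one_conj (nc_rot m) h
      rw [ff_conj, one_mul]
    · simp
  have h2 : ((m+1 : ℕ) : ℚ) * (∑ c : Perm (Fin (m+1)), (if nc c = 1 then (1 : ℚ) else 0))
      = Lah (m+1) 1 := by
    rw [Finset.mul_sum, Lah]
    apply Finset.sum_congr rfl
    intro c _
    split_ifs with h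
    · have := NN_formula 0 c h
      simpa [NN, h] using this
    · simp
  have h3 : ((m+1 : ℕ) : ℚ) * ∑ σ : Perm (Fin (m+1)), (if nc σ = k + 1 then NN k σ else 0)
      = (k.factorial : ℚ) * ((m+1 : ℕ) : ℚ) ^ k * Lah (m+1) (k+1) := by
    rw [Finset.mul_sum, Lah, Finset.mul_sum]
    apply Finset.sum_congr rfl
    intro c _
    split_ifs with h
    · have := NN_formula k c h
      simpa using this
    · simp
  have l1 := Lah_formula m 0
  have l2 := Lah_formula m k
  have h4 := Nat.add_one_mul_choose_eq m k
  have h4' : ((m : ℚ)+1) * (m.choose k) = ((m+1).choose (k+1) : ℚ) * (k+1) := by exact_mod_cast h4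
  simp only [zero_add, Nat.factorial_one, Nat.cast_one, one_mul, Nat.choose_zero_right,
        mul_one] at l1
  rw [h1] at dc
  rw [← dc, ← mul_assoc, h2, l1] at h3
  rw [Nat.factorial_succ k] at l2
  have hpos : ((m+1).factorial : ℚ) ≠ 0 := by exact_mod_cast (Nat.factorial_pos _).ne'
  have hk : ((k : ℚ) + 1) ≠ 0 := by positivity
  apply mul_left_cancel₀ (mul_ne_zero hpos hk)
  push_cast at *
  linear_combination ((m:ℚ)+1) * (k+1) * h3 + ((m:ℚ)+1)^(k+1) * l2 +
    ((m:ℚ)+1)^k * ((m+1).factorial : ℚ) * h4'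

section
variable {α : Type*} [Fintype α] [DecidableEq α]

theorem nc_le_card (σ : Perm α) : nc σ ≤ Fintype.card α := Finset.card_image_le

theorem nc_one_perm : nc (1 : Perm α) = Fintype.card α := by
  unfold nc orbs
  rw [Finset.card_image_of_injective, Finset.card_univ]
  intro x y h
  rw [orb_eq] at h
  simpa using h

theorem nc_list (l : List (Perm α)) (hl : ∀ τ ∈ l, τ.IsSwap) (ρ : Perm α) :
    nc ρ ≤ nc (l.prod * ρ) + l.length := by
  induction l with
  | nil => simp
  | cons τ l ih =>
    have h1 := ih (fun t ht => hl t (List.mem_cons_of_mem _ ht))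
    have h2 := nc_swap_cases (l.prod * ρ) τ (hl τ List.mem_cons_self)
    rw [List.prod_cons, mul_assoc, List.length_cons]
    omega

theorem exists_list (d : ℕ) : ∀ π : Perm α, nc π + d = Fintype.card α →
    ∃ l : List (Perm α), (∀ τ ∈ l, τ.IsSwap) ∧ l.length = d ∧ l.prod = π := by
  induction d with
  | zero =>
    intro π h
    refine ⟨[], by simp, rfl, ?_⟩
    by_contra hne
    obtain ⟨x, hx⟩ : ∃ x, π x ≠ x := by
      by_contra hc
      push Not at hc
      exact hne (Equiv.ext hc).symm
    have h1 := nc_cut π (x := x) (y := π x) (Ne.symm hx) (sc_step π x)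
    have h2 := nc_le_card (swap x (π x) * π)
    omega
  | succ d ih =>
    intro π h
    obtain ⟨x, hx⟩ : ∃ x, π x ≠ x := by
      by_contra hc
      push Not at hc
      have : π = 1 := Equiv.ext hc
      rw [this, nc_one_perm] at h
      omega
    have h1 := nc_cut π (x := x) (y := π x) (Ne.symm hx) (sc_step π x)
    obtain ⟨l, hl, hd, hp⟩ := ih (swap x (π x) * π) (by omega)
    refine ⟨swap x (π x) :: l, ?_, by simp [hd], ?_⟩
    · intro τ hτ
      rcases List.mem_cons.1 hτ with rfl | h2
      · exact ⟨x, π x, Ne.symm hx, rfl⟩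
      · exact hl τ h2
    · rw [List.prod_cons, hp, ← mul_assoc, swap_mul_self, one_mul]

end

theorem mem_SigmaSet (m k : ℕ) (hk : k ≤ m) (τ : Fin k → Perm (Fin (m+1))) :
    τ ∈ SigmaSet (m+1) k ↔ (∀ l, (τ l).IsSwap) ∧
      nc ((List.ofFn τ).prod⁻¹ * finRotate (m+1)) = k + 1 := by
  have hc := nc_rot m
  have a1 := nc_pos ((List.ofFn τ).prod⁻¹ * finRotate (m+1))
  have a2 := nc_le_card ((List.ofFn τ).prod⁻¹ * finRotate (m+1))
  have a3 := nc_le_card (List.ofFn τ).prod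
  simp only [SigmaSet, Set.mem_setOf_eq, precLe, normPerm, cycleCount_eq]
  rw [Fintype.card_fin] at a2 a3
  constructor
  · rintro ⟨h1, h2, h3⟩
    exact ⟨h1, by omega⟩
  · rintro ⟨h1, h2⟩
    have b1 := nc_list (List.ofFn τ) (by
      intro t ht
      obtain ⟨i, rfl⟩ := (List.mem_ofFn' _ _).1 ht
      exact h1 i) 1
    rw [nc_one_perm, mul_one, List.length_ofFn, Fintype.card_fin] at b1
    obtain ⟨l, hl, hd, hp⟩ := exists_list (m + 1 - nc (List.ofFn τ).prod) (List.ofFn τ).prod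
      (by rw [Fintype.card_fin]; omega)
    have b2 := nc_list l hl ((List.ofFn τ).prod⁻¹ * finRotate (m+1))
    rw [hp, mul_inv_cancel_left, hd, hc, h2] at b2
    refine ⟨h1, ?_, ?_⟩ <;> omega

theorem card_SigmaSet (m k : ℕ) (hk : k ≤ m) :
    (m+1) * Nat.card (SigmaSet (m+1) k) = (m+1)^k * (m+1).choose (k+1) := by
  classical
  have h := ff_formula m k
  have h1 : ff k (finRotate (m+1)) = (Nat.card (SigmaSet (m+1) k) : ℚ) := by
    unfold ff
    rw [Finset.sum_boole, Nat.card_eq_fintype_card, Fintype.card_subtype]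
    congr 2
    ext τ
    simp only [Finset.mem_filter, Finset.mem_univ, true_and]
    exact (mem_SigmaSet m k hk τ).symm
  rw [h1] at h
  exact_mod_cast h

abbrev Dom (m k : ℕ) := (Fin k → Fin (m+1)) × {B : Finset (Fin (m+1)) // B.card = k + 1}

def sh {m k : ℕ} (t : Fin (m+1)) (p : Dom m k) : Dom m k :=
  (fun l => p.1 l + t, ⟨p.2.1.image (fun x => x + t), by
    rw [Finset.card_image_of_injective _ (add_left_injective t)]; exact p.2.2⟩)

theorem sh_zero {m k : ℕ} (p : Dom m k) : sh 0 p = p := by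
  refine Prod.ext ?_ (Subtype.ext ?_)
  · funext l; simp [sh]
  · simp [sh]

theorem sh_add {m k : ℕ} (s t : Fin (m+1)) (p : Dom m k) : sh s (sh t p) = sh (t + s) p := by
  refine Prod.ext ?_ (Subtype.ext ?_)
  · funext l; simp [sh, add_assoc]
  · simp only [sh, Finset.image_image]
    congr 1
    funext x
    simp [add_assoc]

theorem sh_free {m k : ℕ} (t : Fin (m+1)) (p : Dom m k) (h : sh t p = p) : t = 0 := by
  rcases k with _ | k
  · obtain ⟨b, hb⟩ := Finset.card_eq_one.1 p.2.2
    have h2 := congrArg (fun q : Dom m 0 => q.2.1) h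
    simp only [sh, hb, Finset.image_singleton, Finset.singleton_inj] at h2
    simpa using h2
  · have h1 := congrFun (congrArg Prod.fst h) 0
    simpa [sh] using h1

theorem sh_inj {m k : ℕ} (p : Dom m k) : Function.Injective (fun t => sh t p) := by
  intro s t h
  have h1 : sh (-t) (sh s p) = sh (-t) (sh t p) := congrArg _ h
  rw [sh_add, sh_add, add_neg_cancel, sh_zero] at h1
  have := sh_free _ _ h1
  rwa [← sub_eq_add_neg, sub_eq_zero] at this

def shSetoid (m k : ℕ) : Setoid (Dom m k) where
  r p q := ∃ t, q = sh t p
  iseqv := ⟨fun p => ⟨0, (sh_zero p).symm⟩, by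
    rintro p q ⟨t, rfl⟩
    exact ⟨-t, by rw [sh_add, add_neg_cancel, sh_zero]⟩, by
    rintro p q r ⟨t, rfl⟩ ⟨s, rfl⟩
    exact ⟨t + s, sh_add _ _ _⟩⟩

theorem card_quot (m k : ℕ) :
    (m+1) * Nat.card (Quotient (shSetoid m k)) = (m+1)^k * (m+1).choose (k+1) := by
  have hb : Function.Bijective (fun q : Fin (m+1) × Quotient (shSetoid m k) => sh q.1 q.2.out) := by
    constructor
    · rintro ⟨s, a⟩ ⟨t, b⟩ h
      have h' : sh s a.out = sh t b.out := h
      have hab : a = b := by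
        rw [← Quotient.out_equiv_out]
        refine (shSetoid m k).iseqv.trans ⟨s, rfl⟩ ?_
        rw [h']
        exact (shSetoid m k).iseqv.symm ⟨t, rfl⟩
      subst hab
      rw [sh_inj _ h']
    · intro p
      obtain ⟨t, ht⟩ := Quotient.mk_out (s := shSetoid m k) p
      exact ⟨(t, Quotient.mk _ p), ht.symm⟩
  have h := Nat.card_eq_of_bijective _ hb
  rw [Nat.card_prod, Nat.card_fin] at h
  rw [h, Nat.card_prod]
  congr 1
  · simp
  · rw [Nat.card_eq_fintype_card, Fintype.card_finset_len, Fintype.card_fin]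

theorem rel_iff {m k : ℕ} (p q : Dom m k) :
    (∃ r : ℤ, (∀ l, q.1 l = ((finRotate (m+1)) ^ r) (p.1 l)) ∧
          (q.2 : Finset (Fin (m+1))) = (p.2 : Finset (Fin (m+1))).image ((finRotate (m+1)) ^ r))
    ↔ ∃ t, q = sh t p := by
  constructor
  · rintro ⟨r, h1, h2⟩
    refine ⟨r • 1, Prod.ext ?_ (Subtype.ext ?_)⟩
    · funext l; rw [h1 l, rot_zpow]; rfl
    · rw [h2]
      simp only [sh]
      apply Finset.image_congr
      intro x _
      exact rot_zpow m r x
  · rintro ⟨t, rfl⟩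
    refine ⟨(t.val : ℤ), ?_, ?_⟩
    · intro l; rw [rot_zpow, val_zsmul]; rfl
    · simp only [sh]
      apply Finset.image_congr
      intro x _
      change x + t = ((finRotate (m+1)) ^ ((t.val : ℕ) : ℤ)) x
      rw [rot_zpow, val_zsmul]

end Helpers

/-- There is a surjection F from {1,…,n}^k × (subsets of {1,…,n} of size k+1) onto Σ_n(k)
whose fibres are exactly the orbits of the shift modulo n; in particular every fibre has
exactly n elements. -/
theorem stmt1 (n k : ℕ) (hn : 1 ≤ n) (hk : k ≤ n - 1) :
    ∃ F : ((Fin k → Fin n) × {B : Finset (Fin n) // B.card = k + 1}) →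
        (Fin k → Equiv.Perm (Fin n)),
      (∀ p, F p ∈ SigmaSet n k) ∧
      (∀ γ ∈ SigmaSet n k, ∃ p, F p = γ) ∧
      (∀ p q, F p = F q ↔
        ∃ r : ℤ, (∀ l, q.1 l = ((finRotate n) ^ r) (p.1 l)) ∧
          (q.2 : Finset (Fin n)) = (p.2 : Finset (Fin n)).image ((finRotate n) ^ r)) ∧
      (∀ γ ∈ SigmaSet n k, {p | F p = γ}.ncard = n) := by
  obtain ⟨m, rfl⟩ : ∃ m, n = m + 1 := ⟨n - 1, by omega⟩
  have hc : Nat.card (Quotient (shSetoid m k)) = Nat.card (SigmaSet (m+1) k) := by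
    have h1 := card_quot m k
    rw [← card_SigmaSet m k (by omega)] at h1
    exact Nat.eq_of_mul_eq_mul_left (Nat.succ_pos m) h1
  have : Finite (Quotient (shSetoid m k)) := Quotient.finite _
  obtain ⟨e⟩ : Nonempty (Quotient (shSetoid m k) ≃ SigmaSet (m+1) k) := Finite.card_eq.1 hc
  have hF : ∀ p q : Dom m k, ((e (Quotient.mk _ p)) : Fin k → Equiv.Perm (Fin (m+1))) =
      e (Quotient.mk _ q) ↔ ∃ t, q = sh t p := by
    intro p q
    rw [Subtype.coe_inj, e.apply_eq_iff_eq, Quotient.eq]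
    rfl
  have hS : ∀ γ ∈ SigmaSet (m+1) k, ∃ p : Dom m k,
      ((e (Quotient.mk _ p)) : Fin k → Equiv.Perm (Fin (m+1))) = γ := by
    intro γ hγ
    obtain ⟨p, hp⟩ := Quotient.exists_rep (e.symm ⟨γ, hγ⟩)
    exact ⟨p, by rw [hp, e.apply_symm_apply]⟩
  refine ⟨fun p => e (Quotient.mk (shSetoid m k) p), fun p => (e _).2, hS, ?_, ?_⟩
  · intro p q
    rw [rel_iff]
    exact hF p q
  · intro γ hγ
    obtain ⟨p, rfl⟩ := hS γ hγ
    have : {q : Dom m k | ((e (Quotient.mk _ q)) : Fin k → Equiv.Perm (Fin (m+1))) =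
        e (Quotient.mk _ p)} = (fun t => sh t p) '' Set.univ := by
      ext q
      rw [Set.mem_setOf_eq, eq_comm, hF]
      simp [eq_comm]
    change Set.ncard {q : Dom m k | ((e (Quotient.mk _ q)) : Fin k → Equiv.Perm (Fin (m+1))) =
        e (Quotient.mk _ p)} = m + 1
    rw [this, Set.ncard_image_of_injective _ (sh_inj p), Set.ncard_univ, Nat.card_fin]
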